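/- Let (Ω,𝔉,P) be a probability space, (𝔉_t)_{t=0}^T a filtration of P-complete sub-σ-algebras, and (Π_t)_{t=0}^T a bid-ask process with solvency cones K_t(ω)=K(Π_t(ω)). Then the following are equivalent: (i) there exists an ℝ^d-valued P-martingale Z=(Z_t)_{t=0}^T adapted to (𝔉_t) with Z_t(ω) ∈ ri K_t*(ω) for a.e. ω and every t; (ii) whenever x_t ∈ L⁰(−K_t,𝔉_t) for t=0,…,T satisfy Σ_{t=0}^T x_t = 0 a.s., one has x_t(ω) ∈ K_t(ω) ∩ (−K_t(ω)) for a.e. ω, for every t=0,…,T. -/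

import Mathlib

open MeasureTheory Set

/-- A bid-ask matrix: positive entries, ones on the diagonal, and
`π^{ij} ≤ π^{ik} π^{kj}`. -/
def IsBidAskMatrix {d : ℕ} (M : Matrix (Fin d) (Fin d) ℝ) : Prop :=
  (∀ i j, 0 < M i j) ∧ (∀ i, M i i = 1) ∧ ∀ i j k, M i j ≤ M i k * M k j

/-- The smallest closed convex cone containing a set `S ⊆ ℝ^d`. -/
def generatedClosedCone {d : ℕ} (S : Set (Fin d → ℝ)) : Set (Fin d → ℝ) :=
  ⋂₀ {C | S ⊆ C ∧ IsClosed C ∧ Convex ℝ C ∧ ∀ x ∈ C, ∀ c : ℝ, 0 ≤ c → c • x ∈ C}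

/-- The solvency cone `K(Π)`: the closed convex cone generated by the standard
basis vectors `e_i` and the vectors `π^{ij} e_i − e_j`. -/
def solvencyCone {d : ℕ} (M : Matrix (Fin d) (Fin d) ℝ) : Set (Fin d → ℝ) :=
  generatedClosedCone
    ((Set.range fun i : Fin d => (Pi.single i 1 : Fin d → ℝ)) ∪
      {v | ∃ i j : Fin d, v = M i j • (Pi.single i 1 : Fin d → ℝ) - Pi.single j 1})

/-- The dual cone `K* = {w : ⟨x,w⟩ ≥ 0 for all x ∈ K}`. -/
def dualCone' {d : ℕ} (K : Set (Fin d → ℝ)) : Set (Fin d → ℝ) :=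
  {w | ∀ x ∈ K, 0 ≤ ∑ i, x i * w i}

/-- `ξ ∈ L⁰(G, ℋ)`: `ξ` is `ℋ`-measurable and `ξ(ω) ∈ G(ω)` for a.e. `ω`. -/
def MemL0 {Ω : Type*} {d : ℕ} {m : MeasurableSpace Ω} (P : Measure Ω)
    (H : MeasurableSpace Ω) (G : Ω → Set (Fin d → ℝ)) (ξ : Ω → Fin d → ℝ) : Prop :=
  Measurable[H] ξ ∧ ∀ᵐ ω ∂P, ξ ω ∈ G ω


theorem refine_step {Ω : Type*} [MeasurableSpace Ω] (N : Ω → Set ℕ)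
    (hN : ∀ n, MeasurableSet {ω | n ∈ N ω}) (A : ℕ → ℕ → Set Ω)
    (hA : ∀ j n, MeasurableSet (A j n))
    (h : ∀ ω, ∃ j, {n | n ∈ N ω ∧ ω ∈ A j n}.Infinite) :
    ∃ N' : Ω → Set ℕ, (∀ n, MeasurableSet {ω | n ∈ N' ω}) ∧ (∀ ω, N' ω ⊆ N ω) ∧
      (∀ ω, (N' ω).Infinite) ∧ ∀ ω, ∃ j, ∀ n ∈ N' ω, ω ∈ A j n := by
  classical
  have hm : ∀ j, MeasurableSet {ω | {n | n ∈ N ω ∧ ω ∈ A j n}.Infinite} := by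
    intro j
    have : {ω | {n | n ∈ N ω ∧ ω ∈ A j n}.Infinite} =
        ⋂ m : ℕ, ⋃ n : ℕ, ⋃ _ : m < n, ({ω | n ∈ N ω} ∩ A j n) := by
      ext ω
      simp only [mem_ofPred_eq, mem_iInter, mem_iUnion, Set.infinite_iff_exists_gt]
      constructor
      · intro h m
        obtain ⟨n, hn, hmn⟩ := h m
        exact ⟨n, hmn, hn⟩
      · intro h m
        obtain ⟨n, hmn, hn⟩ := h m
        exact ⟨n, hn, hmn⟩
    rw [this]
    exact MeasurableSet.iInter fun m => MeasurableSet.iUnion fun n =>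
      MeasurableSet.iUnion fun _ => (hN n).inter (hA j n)
  have hJ : Measurable fun ω => Nat.find (h ω) := measurable_find h hm
  refine ⟨fun ω => {n | n ∈ N ω ∧ ω ∈ A (Nat.find (h ω)) n}, ?_, ?_, ?_, ?_⟩
  · intro n
    have : {ω | n ∈ {n | n ∈ N ω ∧ ω ∈ A (Nat.find (h ω)) n}} =
        ⋃ j : ℕ, (((fun ω => Nat.find (h ω)) ⁻¹' {j}) ∩ ({ω | n ∈ N ω} ∩ A j n)) := by
      ext ω
      simp only [mem_ofPred_eq, mem_iUnion, mem_inter_iff, mem_preimage, mem_singleton_iff]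
      constructor
      · rintro ⟨h1, h2⟩
        exact ⟨_, rfl, h1, h2⟩
      · rintro ⟨j, rfl, h1, h2⟩
        exact ⟨h1, h2⟩
    rw [this]
    exact MeasurableSet.iUnion fun j =>
      (hJ (measurableSet_singleton j)).inter ((hN n).inter (hA j n))
  · intro ω n hn
    exact hn.1
  · intro ω
    exact Nat.find_spec (h ω)
  · intro ω
    exact ⟨_, fun n hn => hn.2⟩

theorem exists_random_subseq {Ω : Type*} [MeasurableSpace Ω] {d : ℕ}
    (v : ℕ → Ω → Fin d → ℝ) (hv : ∀ n, Measurable (v n))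
    (hb : ∀ ω, ∃ R : ℕ, {n | ‖v n ω‖ ≤ R}.Infinite) :
    ∃ (σ : ℕ → Ω → ℕ) (c : Ω → Fin d → ℝ), (∀ k, Measurable (σ k)) ∧ Measurable c ∧
      (∀ ω, Filter.Tendsto (fun k => σ k ω) Filter.atTop Filter.atTop) ∧
      ∀ ω, Filter.Tendsto (fun k => v (σ k ω) ω) Filter.atTop (nhds (c ω)) := by
  classical
  -- state: measurable infinite random set of indices on which v is bounded
  let St := {N : Ω → Set ℕ // (∀ n, MeasurableSet {ω | n ∈ N ω}) ∧ (∀ ω, (N ω).Infinite) ∧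
    ∀ ω, ∃ R : ℕ, ∀ n ∈ N ω, ‖v n ω‖ ≤ R}
  have h0 : Nonempty St := by
    obtain ⟨N', h1, -, h3, h4⟩ := refine_step (fun _ : Ω => (univ : Set ℕ)) (by simp)
      (fun j n => {ω | ‖v n ω‖ ≤ j}) (fun j n => measurableSet_le (hv n).norm measurable_const)
      (by simpa using hb)
    exact ⟨⟨N', h1, h3, h4⟩⟩
  let q := TopologicalSpace.denseSeq (Fin d → ℝ)
  have hstep : ∀ (k : ℕ) (N : St), ∃ N' : St, (∀ ω, N'.1 ω ⊆ N.1 ω) ∧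
      ∀ ω, ∃ j, ∀ n ∈ N'.1 ω, dist (v n ω) (q j) < (1 / 2 : ℝ) ^ k := by
    rintro k ⟨N, hN1, hN2, hN3⟩
    obtain ⟨N', h1, h2, h3, h4⟩ := refine_step N hN1
      (fun j n => {ω | dist (v n ω) (q j) < (1 / 2 : ℝ) ^ k})
      (fun j n => measurableSet_lt ((hv n).dist measurable_const) measurable_const)
      (by
        intro ω
        obtain ⟨R, hR⟩ := hN3 ω
        have hc : IsCompact (Metric.closedBall (0 : Fin d → ℝ) R) := isCompact_closedBall _ _
        obtain ⟨t, ht⟩ := hc.elim_finite_subcover (fun j => Metric.ball (q j) ((1 / 2 : ℝ) ^ k))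
          (fun j => Metric.isOpen_ball) (by
            intro x _
            obtain ⟨j, hj⟩ := (TopologicalSpace.denseRange_denseSeq (Fin d → ℝ)).exists_dist_lt x
              (by positivity : (0 : ℝ) < (1 / 2 : ℝ) ^ k)
            exact mem_iUnion.2 ⟨j, hj⟩)
        by_contra hcon
        push Not at hcon
        apply hN2 ω
        refine (t.finite_toSet.biUnion fun j _ => hcon j).subset ?_
        intro n hn
        have := ht (show v n ω ∈ Metric.closedBall (0 : Fin d → ℝ) R by
          simpa using hR n hn)
        simp only [mem_iUnion] at this
        obtain ⟨j, hj, hj'⟩ := this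
        exact mem_biUnion (Finset.mem_coe.2 hj) ⟨hn, hj'⟩)
    exact ⟨⟨N', h1, h3, fun ω => (hN3 ω).imp fun R hR n hn => hR n (h2 ω hn)⟩, h2, h4⟩
  choose nx hnx1 hnx2 using hstep
  let S : ℕ → St := fun k => Nat.rec h0.some (fun k N => nx k N) k
  have hS : ∀ k, S (k + 1) = nx k (S k) := fun k => rfl
  have hanti : ∀ ω, Antitone fun k => (S k).1 ω := by
    intro ω
    apply antitone_nat_of_succ_le
    intro k
    rw [hS]
    exact hnx1 _ _ ω
  have hex : ∀ k ω, ∃ n, n ∈ (S (k + 1)).1 ω ∧ k < n := by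
    intro k ω
    obtain ⟨n, h1, h2⟩ := ((S (k + 1)).2.2.1 ω).exists_gt k
    exact ⟨n, h1, h2⟩
  let σ : ℕ → Ω → ℕ := fun k ω => Nat.find (hex k ω)
  have hσ : ∀ k ω, σ k ω ∈ (S (k + 1)).1 ω ∧ k < σ k ω := fun k ω => Nat.find_spec (hex k ω)
  have hσm : ∀ k, Measurable (σ k) := by
    intro k
    refine measurable_find (hex k) fun n => ?_
    exact ((S (k + 1)).2.1 n).inter (MeasurableSet.const (k < n))
  have hcau : ∀ ω, CauchySeq fun k => v (σ k ω) ω := by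
    intro ω
    refine cauchySeq_of_le_tendsto_0 (fun k => 2 * (1 / 2 : ℝ) ^ k) ?_ ?_
    · intro n p k hn hp
      obtain ⟨j, hj⟩ := hnx2 k (S k) ω
      have a := hj _ (by rw [← hS]; exact hanti ω (by omega : k + 1 ≤ n + 1) (hσ n ω).1)
      have b := hj _ (by rw [← hS]; exact hanti ω (by omega : k + 1 ≤ p + 1) (hσ p ω).1)
      have := dist_triangle_right (v (σ n ω) ω) (v (σ p ω) ω) (q j)
      linarith
    · have := (tendsto_pow_atTop_nhds_zero_of_lt_one (by norm_num : (0 : ℝ) ≤ 1 / 2)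
        (by norm_num)).const_mul 2
      simpa using this
  choose c hc using fun ω => cauchySeq_tendsto_of_complete (hcau ω)
  refine ⟨σ, c, hσm, ?_, ?_, hc⟩
  · refine measurable_of_tendsto_metrizable (f := fun k ω => v (σ k ω) ω) ?_ (tendsto_pi_nhds.2 hc)
    intro k
    have : Measurable fun p : ℕ × Ω => v p.1 p.2 := measurable_from_prod_countable_right hv
    exact this.comp ((hσm k).prodMk measurable_id)
  · intro ω
    exact Filter.tendsto_atTop_mono (fun k => (hσ k ω).2.le) Filter.tendsto_id

structure GoodSet {Ω : Type*} {d : ℕ} {m : MeasurableSpace Ω} (P : Measure Ω)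
    (F : MeasurableSpace Ω) (R : Set (Ω → Fin d → ℝ)) : Prop where
  zero : (fun _ => 0) ∈ R
  add : ∀ f g, f ∈ R → g ∈ R → (fun ω => f ω + g ω) ∈ R
  smul : ∀ (a : Ω → ℝ) (f), Measurable[F] a → (∀ ω, 0 ≤ a ω) → f ∈ R → (fun ω => a ω • f ω) ∈ R
  closed : ∀ (f : ℕ → Ω → Fin d → ℝ) (ξ : Ω → Fin d → ℝ), (∀ n, f n ∈ R) →
    (∀ᵐ ω ∂P, Filter.Tendsto (fun n => f n ω) Filter.atTop (nhds (ξ ω))) → ξ ∈ R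

theorem GoodSet.congr {Ω : Type*} {d : ℕ} {m : MeasurableSpace Ω} {P : Measure Ω}
    {F : MeasurableSpace Ω} {R : Set (Ω → Fin d → ℝ)} (h : GoodSet P F R)
    {f g : Ω → Fin d → ℝ} (hf : f ∈ R) (hfg : ∀ᵐ ω ∂P, f ω = g ω) : g ∈ R := by
  refine h.closed (fun _ => f) g (fun _ => hf) ?_
  filter_upwards [hfg] with ω hω
  rw [hω]
  exact tendsto_const_nhds

theorem GoodSet.sum {Ω : Type*} {d : ℕ} {m : MeasurableSpace Ω} {P : Measure Ω}
    {F : MeasurableSpace Ω} {R : Set (Ω → Fin d → ℝ)} (h : GoodSet P F R) {ι : Type*}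
    (s : Finset ι) (f : ι → Ω → Fin d → ℝ) (hf : ∀ i ∈ s, f i ∈ R) :
    (fun ω => ∑ i ∈ s, f i ω) ∈ R := by
  classical
  induction s using Finset.induction_on with
  | empty => simpa using h.zero
  | insert a s ha ih =>
    simp only [Finset.sum_insert ha]
    exact h.add _ _ (hf a (by simp)) (ih fun i hi => hf i (by simp [hi]))

theorem GoodSet.indicator {Ω : Type*} {d : ℕ} {m : MeasurableSpace Ω} {P : Measure Ω}
    {F : MeasurableSpace Ω} {R : Set (Ω → Fin d → ℝ)} (h : GoodSet P F R) {A : Set Ω}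
    (hA : MeasurableSet[F] A) {f : Ω → Fin d → ℝ} (hf : f ∈ R) : A.indicator f ∈ R := by
  classical
  refine h.congr (h.smul (A.indicator fun _ => 1) f ?_ ?_ hf) ?_
  · exact Measurable.indicator measurable_const hA
  · intro ω
    exact indicator_nonneg (fun _ _ => zero_le_one) ω
  · refine Filter.Eventually.of_forall fun ω => ?_
    by_cases hω : ω ∈ A <;> simp [hω]

theorem GoodSet.signed {Ω : Type*} {d : ℕ} {m : MeasurableSpace Ω} {P : Measure Ω}
    {F : MeasurableSpace Ω} {R : Set (Ω → Fin d → ℝ)} (h : GoodSet P F R)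
    {f : Ω → Fin d → ℝ} (hf : f ∈ R) (hf' : -f ∈ R) {b : Ω → ℝ} (hb : Measurable[F] b) :
    (fun ω => b ω • f ω) ∈ R := by
  refine h.congr (h.add _ _ (h.smul (fun ω => max (b ω) 0) f (hb.max measurable_const)
    (fun _ => le_max_right _ _) hf)
    (h.smul (fun ω => max (-b ω) 0) (-f) (hb.neg.max measurable_const)
    (fun _ => le_max_right _ _) hf')) ?_
  refine Filter.Eventually.of_forall fun ω => ?_
  simp only [Pi.neg_apply, smul_neg, ← sub_eq_add_neg, ← sub_smul]
  congr 1
  rcases le_total (b ω) 0 with h | h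
  · rw [max_eq_right h, max_eq_left (by linarith)]; ring
  · rw [max_eq_left h, max_eq_right (by linarith)]; ring

theorem GoodSet.random {Ω : Type*} {d : ℕ} {m : MeasurableSpace Ω} {P : Measure Ω}
    {F : MeasurableSpace Ω} {R : Set (Ω → Fin d → ℝ)} (h : GoodSet P F R)
    {f : ℕ → Ω → Fin d → ℝ} (hf : ∀ n, f n ∈ R) {σ : Ω → ℕ} (hσ : Measurable[F] σ) :
    (fun ω => f (σ ω) ω) ∈ R := by
  classical
  refine h.closed (fun N ω => ∑ n ∈ Finset.range N, (σ ⁻¹' {n}).indicator (f n) ω) _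
    (fun N => h.sum _ _ fun n _ => h.indicator (hσ (measurableSet_singleton n)) (hf n)) ?_
  refine Filter.Eventually.of_forall fun ω => ?_
  refine tendsto_const_nhds.congr' ?_
  filter_upwards [Filter.eventually_gt_atTop (σ ω)] with N hN
  rw [Finset.sum_eq_single (σ ω)]
  · simp
  · intro b _ hb
    simp [hb.symm]
  · intro hn
    simp at hn
    omega

/-- closed convex cones in an elementary form -/
structure IsCC {d : ℕ} (C : Set (Fin d → ℝ)) : Prop where
  zero : 0 ∈ C
  add : ∀ x ∈ C, ∀ y ∈ C, x + y ∈ C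
  smul : ∀ x ∈ C, ∀ a : ℝ, 0 ≤ a → a • x ∈ C
  closed : IsClosed C

section
variable {Ω : Type*} {d : ℕ} {m : MeasurableSpace Ω} {P : Measure Ω}
    {F : MeasurableSpace Ω} {C : Ω → Set (Fin d → ℝ)}

theorem L0zero (hC : ∀ ω, IsCC (C ω)) : MemL0 P F C (fun _ => 0) :=
  ⟨measurable_const, Filter.Eventually.of_forall fun ω => (hC ω).zero⟩

theorem L0add (hC : ∀ ω, IsCC (C ω)) {f g : Ω → Fin d → ℝ} (hf : MemL0 P F C f)
    (hg : MemL0 P F C g) : MemL0 P F C (fun ω => f ω + g ω) := by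
  refine ⟨hf.1.add hg.1, ?_⟩
  filter_upwards [hf.2, hg.2] with ω h1 h2 using (hC ω).add _ h1 _ h2

theorem L0smul (hC : ∀ ω, IsCC (C ω)) {f : Ω → Fin d → ℝ} (hf : MemL0 P F C f)
    {a : Ω → ℝ} (ha : Measurable[F] a) (ha0 : ∀ ω, 0 ≤ a ω) :
    MemL0 P F C (fun ω => a ω • f ω) := by
  refine ⟨ha.smul hf.1, ?_⟩
  filter_upwards [hf.2] with ω h1 using (hC ω).smul _ h1 _ (ha0 ω)

theorem L0sum (hC : ∀ ω, IsCC (C ω)) {ι : Type*}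
    (s : Finset ι) (f : ι → Ω → Fin d → ℝ) (hf : ∀ i ∈ s, MemL0 P F C (f i)) :
    MemL0 P F C (fun ω => ∑ i ∈ s, f i ω) := by
  classical
  induction s using Finset.induction_on with
  | empty => simpa using L0zero hC
  | insert a s ha ih =>
    simp only [Finset.sum_insert ha]
    exact L0add hC (hf a (by simp)) (ih fun i hi => hf i (by simp [hi]))

theorem L0indicator (hC : ∀ ω, IsCC (C ω)) {f : Ω → Fin d → ℝ} (hf : MemL0 P F C f)
    {A : Set Ω} (hA : MeasurableSet[F] A) : MemL0 P F C (A.indicator f) := by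
  classical
  refine ⟨hf.1.indicator hA, ?_⟩
  filter_upwards [hf.2] with ω h1
  by_cases hω : ω ∈ A
  · simpa [hω] using h1
  · simpa [hω] using (hC ω).zero

theorem L0signed (hC : ∀ ω, IsCC (C ω)) {f : Ω → Fin d → ℝ} (hf : MemL0 P F C f)
    (hf' : MemL0 P F C (-f)) {b : Ω → ℝ} (hb : Measurable[F] b) :
    MemL0 P F C (fun ω => b ω • f ω) := by
  refine ⟨hb.smul hf.1, ?_⟩
  filter_upwards [hf.2, hf'.2] with ω h1 h2
  rcases le_total 0 (b ω) with h | h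
  · exact (hC ω).smul _ h1 _ h
  · have := (hC ω).smul _ h2 (-b ω) (by linarith)
    simpa using this

theorem L0random {f : ℕ → Ω → Fin d → ℝ}
    (hf : ∀ n, MemL0 P F C (f n)) {σ : Ω → ℕ} (hσ : Measurable[F] σ) :
    MemL0 P F C (fun ω => f (σ ω) ω) := by
  constructor
  · have : Measurable[Prod.instMeasurableSpace (m₂ := F)] fun p : ℕ × Ω => f p.1 p.2 :=
      @measurable_from_prod_countable_right _ _ _ _ F _ _ _ _ (fun n => (hf n).1)
    exact this.comp (hσ.prodMk measurable_id)
  · filter_upwards [ae_all_iff.2 fun n => (hf n).2] with ω h using h _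

theorem L0closed (hC : ∀ ω, IsCC (C ω)) {f : ℕ → Ω → Fin d → ℝ} {ξ : Ω → Fin d → ℝ}
    (hf : ∀ n, MemL0 P F C (f n))
    (hlim : ∀ ω, Filter.Tendsto (fun n => f n ω) Filter.atTop (nhds (ξ ω))) :
    MemL0 P F C ξ := by
  constructor
  · exact measurable_of_tendsto_metrizable (fun n => (hf n).1) (tendsto_pi_nhds.2 hlim)
  · filter_upwards [ae_all_iff.2 fun n => (hf n).2] with ω h
    exact (hC ω).closed.mem_of_tendsto (hlim ω) (Filter.Eventually.of_forall h)

end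

theorem meas_bddset {Ω : Type*} [MeasurableSpace Ω] {d : ℕ}
    (c : ℕ → Ω → Fin d → ℝ) (hc : ∀ n, Measurable (c n)) :
    MeasurableSet {ω | ∃ R : ℕ, {n | ‖c n ω‖ ≤ R}.Infinite} := by
  have : {ω | ∃ R : ℕ, {n | ‖c n ω‖ ≤ R}.Infinite} =
      ⋃ R : ℕ, ⋂ m : ℕ, ⋃ n : ℕ, ⋃ _ : m < n, {ω | ‖c n ω‖ ≤ R} := by
    ext ω
    simp only [mem_ofPred_eq, mem_iInter, mem_iUnion, Set.infinite_iff_exists_gt]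
    refine exists_congr fun R => forall_congr' fun m => ?_
    constructor
    · rintro ⟨n, hn, hmn⟩
      exact ⟨n, hmn, hn⟩
    · rintro ⟨n, hmn, hn⟩
      exact ⟨n, hn, hmn⟩
  rw [this]
  exact MeasurableSet.iUnion fun R => MeasurableSet.iInter fun m => MeasurableSet.iUnion fun n =>
      MeasurableSet.iUnion fun _ => measurableSet_le (hc n).norm measurable_const

theorem tendsto_norm_of_not_bdd {d : ℕ} (c : ℕ → Fin d → ℝ)
    (h : ¬ ∃ R : ℕ, {n | ‖c n‖ ≤ R}.Infinite) :
    Filter.Tendsto (fun n => ‖c n‖) Filter.atTop Filter.atTop := by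
  push Not at h
  rw [Filter.tendsto_atTop]
  intro b
  obtain ⟨R, hR⟩ := exists_nat_ge b
  have := (h R).eventually_cofinite_notMem
  rw [Nat.cofinite_eq_atTop] at this
  filter_upwards [this] with n hn
  simp at hn
  linarith

theorem one_step {Ω : Type*} {d : ℕ} {m : MeasurableSpace Ω} {P : Measure Ω}
    {F : MeasurableSpace Ω} {C : Ω → Set (Fin d → ℝ)} (hC : ∀ ω, IsCC (C ω))
    {R : Set (Ω → Fin d → ℝ)} (hR : GoodSet P F R)
    (hlin : ∀ c r : Ω → Fin d → ℝ, MemL0 P F C c → r ∈ R → (∀ᵐ ω ∂P, c ω + r ω = 0) →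
      MemL0 P F C (-c) ∧ -r ∈ R) (k : ℕ) :
    ∀ S : Finset (Fin d), Sᶜ.card ≤ k → ∀ (c r : ℕ → Ω → Fin d → ℝ) (ξ : Ω → Fin d → ℝ),
      (∀ n, MemL0 P F C (c n)) → (∀ n, r n ∈ R) → (∀ n ω, ∀ i ∈ S, c n ω i = 0) →
      (∀ᵐ ω ∂P, Filter.Tendsto (fun n => c n ω + r n ω) Filter.atTop (nhds (ξ ω))) →
      ∃ c' r' : Ω → Fin d → ℝ, MemL0 P F C c' ∧ r' ∈ R ∧ ∀ᵐ ω ∂P, ξ ω = c' ω + r' ω := by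
  classical
  induction k with
  | zero =>
    intro S hS c r ξ hc hr hcS hlim
    have hS' : S = Finset.univ := by
      simpa using hS
    have hc0 : ∀ n ω, c n ω = 0 := by
      intro n ω
      ext i
      exact hcS n ω i (by simp [hS'])
    refine ⟨fun _ => 0, ξ, L0zero hC, hR.closed r ξ hr ?_, by simp⟩
    filter_upwards [hlim] with ω h
    simpa [hc0] using h
  | succ k ih =>
    intro S hS c r ξ hc hr hcS hlim
    set B : Set Ω := {ω | ∃ R : ℕ, {n | ‖c n ω‖ ≤ R}.Infinite} with hBdef
    have hB : MeasurableSet[F] B := @meas_bddset Ω F d c (fun n => (hc n).1)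
    have hBc : ∀ ω, ω ∉ B → Filter.Tendsto (fun n => ‖c n ω‖) Filter.atTop Filter.atTop :=
      fun ω hω => tendsto_norm_of_not_bdd (fun n => c n ω) hω
    let a : ℕ → Ω → ℝ := fun n ω => if ω ∈ B then 1 else ‖c n ω‖⁻¹
    have ham : ∀ n, Measurable[F] (a n) := fun n =>
      Measurable.ite hB measurable_const (hc n).1.norm.inv
    have ha0 : ∀ n ω, 0 ≤ a n ω := by
      intro n ω
      simp only [a]
      split_ifs <;> positivity
    let u : ℕ → Ω → Fin d → ℝ := fun n ω => a n ω • c n ω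
    have hu : ∀ n, MemL0 P F C (u n) := fun n => L0smul hC (hc n) (ham n) (ha0 n)
    have hub : ∀ ω, ∃ R : ℕ, {n | ‖u n ω‖ ≤ R}.Infinite := by
      intro ω
      by_cases hω : ω ∈ B
      · obtain ⟨R, hR⟩ := hω
        have hω : ω ∈ B := ⟨R, hR⟩
        exact ⟨R, by simpa [u, a, hω] using hR⟩
      · refine ⟨1, ?_⟩
        have : {n | ‖u n ω‖ ≤ (1 : ℕ)} = univ := by
          ext n
          simp only [mem_ofPred_eq, mem_univ, iff_true, u, a, hω, if_false, norm_smul, norm_inv,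
            norm_norm, Nat.cast_one]
          exact inv_mul_le_one
        rw [this]
        exact infinite_univ
    obtain ⟨σ, y0, hσm, -, hσt, hσl⟩ := @exists_random_subseq Ω F d u (fun n => (hu n).1) hub
    have hy0 : MemL0 P F C y0 := L0closed hC (fun k => L0random hu (hσm k)) hσl
    -- remainder
    let w : ℕ → Ω → Fin d → ℝ := fun n ω => a n ω • r n ω
    have hw : ∀ n, w n ∈ R := fun n => hR.smul _ _ (ham n) (ha0 n) (hr n)
    have hr0 : (fun ω => B.indicator ξ ω - y0 ω) ∈ R := by
      refine hR.closed (fun k ω => w (σ k ω) ω) _ (fun k => hR.random hw (hσm k)) ?_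
      filter_upwards [hlim] with ω hω
      have h1 := hω.comp (hσt ω)
      have h2 : Filter.Tendsto (fun k => a (σ k ω) ω • (c (σ k ω) ω + r (σ k ω) ω)) Filter.atTop
          (nhds (B.indicator ξ ω)) := by
        by_cases hωB : ω ∈ B
        · simpa [a, hωB, Function.comp_def] using h1
        · have h3 : Filter.Tendsto (fun k => ‖c (σ k ω) ω‖⁻¹) Filter.atTop (nhds 0) :=
            ((hBc ω hωB).comp (hσt ω)).inv_tendsto_atTop
          simpa [a, hωB, Function.comp_def] using h3.smul h1
      have h4 := h2.sub (hσl ω)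
      refine h4.congr fun k => ?_
      simp [u, w, smul_add]
    set r0 : Ω → Fin d → ℝ := fun ω => B.indicator ξ ω - y0 ω with hr0def
    let y : Ω → Fin d → ℝ := Bᶜ.indicator y0
    let q : Ω → Fin d → ℝ := Bᶜ.indicator r0
    have hy : MemL0 P F C y := L0indicator hC hy0 hB.compl
    have hq : q ∈ R := hR.indicator hB.compl hr0
    have hyq : ∀ ω, y ω + q ω = 0 := by
      intro ω
      by_cases hω : ω ∈ B <;> simp [y, q, r0, hω]
    obtain ⟨hy', hq'⟩ := hlin y q hy hq (Filter.Eventually.of_forall hyq)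
    have hynorm : ∀ ω, ω ∉ B → y ω ≠ 0 := by
      intro ω hω h0
      have h1 : y0 ω = 0 := by simpa [y, hω] using h0
      have h2 := (hσl ω).norm
      rw [h1, norm_zero] at h2
      have h3 : Filter.Tendsto (fun k => ‖u (σ k ω) ω‖) Filter.atTop (nhds 1) := by
        refine tendsto_const_nhds.congr' ?_
        have := ((hBc ω hω).comp (hσt ω)).eventually_gt_atTop 0
        filter_upwards [this] with k hk
        simp only [Function.comp] at hk
        simp only [u, a, hω, if_false, norm_smul, norm_inv, norm_norm]
        rw [inv_mul_cancel₀ hk.ne']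
      exact zero_ne_one (tendsto_nhds_unique h2 h3)
    have hyS : ∀ ω, ∀ i ∈ S, y ω i = 0 := by
      intro ω i hi
      have h1 : y0 ω i = 0 := by
        have h2 := tendsto_pi_nhds.1 (hσl ω) i
        refine tendsto_nhds_unique h2 ?_
        refine tendsto_const_nhds.congr fun k => ?_
        simp [u, hcS _ ω i hi]
      by_cases hω : ω ∈ B <;> simp [y, hω, h1]
    -- partition
    let A : Fin d → Set Ω := fun i => Bᶜ ∩ {ω | y ω i ≠ 0 ∧ ∀ j, j < i → y ω j = 0}
    have hyi : ∀ i, Measurable[F] fun ω => y ω i := fun i => (measurable_pi_apply i).comp hy.1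
    have hA : ∀ i, MeasurableSet[F] (A i) := by
      intro i
      refine hB.compl.inter ?_
      have : {ω | y ω i ≠ 0 ∧ ∀ j, j < i → y ω j = 0} =
          ((fun ω => y ω i) ⁻¹' {0})ᶜ ∩ ⋂ j, ⋂ _ : j < i, ((fun ω => y ω j) ⁻¹' {0}) := by
        ext ω
        simp
      rw [this]
      exact (hyi i (measurableSet_singleton 0)).compl.inter
        (MeasurableSet.iInter fun j => MeasurableSet.iInter fun _ =>
          hyi j (measurableSet_singleton 0))
    have key : ∀ i, ∃ c' r' : Ω → Fin d → ℝ, MemL0 P F C c' ∧ r' ∈ R ∧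
        ∀ᵐ ω ∂P, (A i).indicator ξ ω = c' ω + r' ω := by
      intro i
      by_cases hi : i ∈ S
      · refine ⟨fun _ => 0, fun _ => 0, L0zero hC, hR.zero, Filter.Eventually.of_forall fun ω => ?_⟩
        have : ω ∉ A i := fun h => h.2.1 (hyS ω i hi)
        simp [this]
      · let b : ℕ → Ω → ℝ := fun n => (A i).indicator fun ω => -(c n ω i / y ω i)
        have hb : ∀ n, Measurable[F] (b n) := fun n =>
          Measurable.indicator (((measurable_pi_apply i).comp (hc n).1).div (hyi i)).neg (hA i)
        have hcard : (insert i S)ᶜ.card ≤ k := by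
          have h1 : (insert i S)ᶜ.card < Sᶜ.card := by
            apply Finset.card_lt_card
            rw [Finset.compl_ssubset_compl]
            exact Finset.ssubset_insert hi
          omega
        refine ih (insert i S) hcard (fun n ω => (A i).indicator (c n) ω + b n ω • y ω)
          (fun n ω => (A i).indicator (r n) ω + b n ω • q ω) _ ?_ ?_ ?_ ?_
        · intro n
          exact L0add hC (L0indicator hC (hc n) (hA i)) (L0signed hC hy hy' (hb n))
        · intro n
          exact hR.add _ _ (hR.indicator (hA i) (hr n)) (hR.signed hq hq' (hb n))
        · intro n ω j hj
          by_cases hω : ω ∈ A i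
          · simp only [b, hω, indicator_of_mem, Pi.add_apply, Pi.smul_apply, smul_eq_mul]
            rcases Finset.mem_insert.1 hj with rfl | hj
            · have := hω.2.1
              field_simp
              ring
            · simp [hcS n ω j hj, hyS ω j hj]
          · simp [b, hω]
        · filter_upwards [hlim] with ω hω
          have : ∀ n, (A i).indicator (c n) ω + b n ω • y ω +
              ((A i).indicator (r n) ω + b n ω • q ω) =
              (A i).indicator (fun ω => c n ω + r n ω) ω := by
            intro n
            have h1 : b n ω • y ω + b n ω • q ω = 0 := by
              rw [← smul_add, hyq, smul_zero]
            rw [add_add_add_comm, h1, add_zero]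
            by_cases hω : ω ∈ A i <;> simp [hω]
          simp only [this]
          by_cases hωA : ω ∈ A i
          · simpa [hωA] using hω
          · simp [hωA]
    choose c' r' hc' hr' hcr using key
    refine ⟨fun ω => B.indicator y0 ω + ∑ i, c' i ω, fun ω => B.indicator r0 ω + ∑ i, r' i ω,
      L0add hC (L0indicator hC hy0 hB) (L0sum hC _ _ fun i _ => hc' i),
      hR.add _ _ (hR.indicator hB hr0) (hR.sum _ _ fun i _ => hr' i), ?_⟩
    filter_upwards [ae_all_iff.2 hcr] with ω hω
    rw [add_add_add_comm, ← Finset.sum_add_distrib]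
    simp only [← hω]
    by_cases hωB : ω ∈ B
    · have h1 : ∀ i, ω ∉ A i := fun i h => h.1 hωB
      simp [h1, hωB, r0]
    · have hne : ∃ i, y ω i ≠ 0 := by
        by_contra hcon
        push Not at hcon
        exact hynorm ω hωB (funext hcon)
      have hmin : ∃ i, ω ∈ A i := by
        obtain ⟨i, hi⟩ := hne
        obtain ⟨i, hi1, hi2⟩ := WellFounded.has_min (wellFounded_lt (α := Fin d))
          {i | y ω i ≠ 0} ⟨i, hi⟩
        refine ⟨i, hωB, hi1, fun j hj => ?_⟩
        by_contra hne
        exact hi2 j hne hj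
      obtain ⟨i, hi⟩ := hmin
      rw [Finset.sum_eq_single i]
      · simp [hi, hωB]
      · intro j _ hj
        have : ω ∉ A j := by
          intro h
          rcases lt_or_gt_of_ne hj with hlt | hlt
          · exact h.2.1 (hi.2.2 j hlt)
          · exact hi.2.1 (h.2.2 i hlt)
        simp [this]
      · simp

def tailSet {Ω : Type*} {d : ℕ} {m : MeasurableSpace Ω} (P : Measure Ω)
    (F : ℕ → MeasurableSpace Ω) (C : ℕ → Ω → Set (Fin d → ℝ)) (N s : ℕ) :
    Set (Ω → Fin d → ℝ) :=
  {ξ | ∃ x : ℕ → Ω → Fin d → ℝ, (∀ t, MemL0 P (F t) (C t) (x t)) ∧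
    ∀ᵐ ω ∂P, ξ ω = ∑ t ∈ Finset.Ico s N, x t ω}

theorem tailSet_good {Ω : Type*} {d : ℕ} {m : MeasurableSpace Ω} {P : Measure Ω}
    {F : ℕ → MeasurableSpace Ω} (hF : Monotone F) {C : ℕ → Ω → Set (Fin d → ℝ)}
    (hC : ∀ t ω, IsCC (C t ω)) (N : ℕ)
    (hNA : ∀ x : ℕ → Ω → Fin d → ℝ, (∀ t, MemL0 P (F t) (C t) (x t)) →
      (∀ᵐ ω ∂P, ∑ t ∈ Finset.range N, x t ω = 0) → ∀ t < N, MemL0 P (F t) (C t) (-(x t)))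
    (k : ℕ) : ∀ s, s + k = N → ∀ s' ≤ s, GoodSet P (F s') (tailSet P F C N s) := by
  classical
  have hgen : ∀ s s', s' ≤ s →
      (∀ (f : ℕ → Ω → Fin d → ℝ) (ξ : Ω → Fin d → ℝ), (∀ n, f n ∈ tailSet P F C N s) →
      (∀ᵐ ω ∂P, Filter.Tendsto (fun n => f n ω) Filter.atTop (nhds (ξ ω))) →
        ξ ∈ tailSet P F C N s) → GoodSet P (F s') (tailSet P F C N s) := by
    intro s s' hs hcl
    refine ⟨⟨fun _ _ => 0, fun t => L0zero (hC t), by simp⟩, ?_, ?_, hcl⟩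
    · rintro f g ⟨x, hx, hfx⟩ ⟨y, hy, hgy⟩
      refine ⟨fun t ω => x t ω + y t ω, fun t => L0add (hC t) (hx t) (hy t), ?_⟩
      filter_upwards [hfx, hgy] with ω h1 h2
      rw [h1, h2, Finset.sum_add_distrib]
    · rintro a f ha ha0 ⟨x, hx, hfx⟩
      refine ⟨fun t ω => if s ≤ t then a ω • x t ω else 0, fun t => ?_, ?_⟩
      · by_cases hst : s ≤ t
        · simp only [hst, if_true]
          exact L0smul (hC t) (hx t) (ha.mono (hF (hs.trans hst)) le_rfl) ha0
        · simp only [hst, if_false]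
          exact L0zero (hC t)
      · filter_upwards [hfx] with ω h1
        rw [h1, Finset.smul_sum]
        refine Finset.sum_congr rfl fun t ht => ?_
        rw [if_pos (Finset.mem_Ico.1 ht).1]
  induction k with
  | zero =>
    intro s hs s' hs'
    refine hgen s s' hs' ?_
    intro f ξ hf hlim
    refine ⟨fun _ _ => 0, fun t => L0zero (hC t), ?_⟩
    have h0 : ∀ᵐ ω ∂P, ∀ n, f n ω = 0 := by
      refine ae_all_iff.2 fun n => ?_
      obtain ⟨x, hx, hfx⟩ := hf n
      filter_upwards [hfx] with ω h
      rw [h, Finset.Ico_eq_empty (by omega), Finset.sum_empty]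
    filter_upwards [h0, hlim] with ω h1 h2
    simp only [h1] at h2
    simpa using (tendsto_nhds_unique h2 tendsto_const_nhds)
  | succ k ih =>
    intro s hs s' hs'
    refine hgen s s' hs' ?_
    intro f ξ hf hlim
    have hsN : s < N := by omega
    have hR : GoodSet P (F s) (tailSet P F C N (s + 1)) := ih (s + 1) (by omega) s (by omega)
    choose x hx hfx using hf
    have hlin : ∀ c r : Ω → Fin d → ℝ, MemL0 P (F s) (C s) c → r ∈ tailSet P F C N (s + 1) →
        (∀ᵐ ω ∂P, c ω + r ω = 0) →
        MemL0 P (F s) (C s) (-c) ∧ -r ∈ tailSet P F C N (s + 1) := by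
      rintro c r hc ⟨y, hy, hry⟩ hcr
      let z : ℕ → Ω → Fin d → ℝ := fun t => if t < s then fun _ => 0 else if t = s then c else y t
      have hzs : z s = c := by simp [z]
      have hzt : ∀ t, s < t → z t = y t := by
        intro t ht
        have h1 : ¬ t < s := by omega
        have h2 : ¬ t = s := by omega
        simp [z, h1, h2]
      have hz : ∀ t, MemL0 P (F t) (C t) (z t) := by
        intro t
        rcases lt_trichotomy t s with h | h | h
        · simp only [z, h, if_true]
          exact L0zero (hC t)
        · subst h
          rw [hzs]; exact hc
        · rw [hzt t h]; exact hy t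
      have hsum : ∀ᵐ ω ∂P, ∑ t ∈ Finset.range N, z t ω = 0 := by
        filter_upwards [hry, hcr] with ω h1 h2
        rw [← Finset.sum_range_add_sum_Ico _ hsN.le, Finset.sum_eq_sum_Ico_succ_bot hsN, hzs,
          Finset.sum_eq_zero, zero_add, ← h2, h1]
        · congr 1
          refine Finset.sum_congr rfl fun t ht => ?_
          rw [hzt t (by have := (Finset.mem_Ico.1 ht).1; omega)]
        · intro t ht
          simp [z, Finset.mem_range.1 ht]
      have hneg := hNA z hz hsum
      refine ⟨by simpa [hzs] using hneg s hsN,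
        ⟨fun t => if s < t ∧ t < N then -(y t) else fun _ => 0, ?_, ?_⟩⟩
      · intro t
        by_cases h : s < t ∧ t < N
        · simp only [h, and_self, if_true]
          rw [← hzt t h.1]
          exact hneg t h.2
        · simp only [h, if_false]
          exact L0zero (hC t)
      · filter_upwards [hry] with ω h1
        rw [Pi.neg_apply, h1, ← Finset.sum_neg_distrib]
        refine Finset.sum_congr rfl fun t ht => ?_
        have := Finset.mem_Ico.1 ht
        rw [if_pos ⟨by omega, this.2⟩, Pi.neg_apply]
    obtain ⟨c', r', hc', ⟨y, hy, hry⟩, hξ⟩ := one_step (hC s) hR hlin d ∅ (by simp)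
      (fun n => x n s) (fun n ω => ∑ t ∈ Finset.Ico (s + 1) N, x n t ω) ξ (fun n => hx n s)
      (fun n => ⟨x n, hx n, by simp⟩) (by simp) (by
        filter_upwards [hlim, ae_all_iff.2 hfx] with ω h1 h2
        refine h1.congr fun n => ?_
        rw [h2, Finset.sum_eq_sum_Ico_succ_bot hsN])
    refine ⟨fun t => if t = s then c' else y t, ?_, ?_⟩
    · intro t
      by_cases h : t = s
      · subst h
        simpa using hc'
      · simpa [h] using hy t
    · filter_upwards [hξ, hry] with ω h1 h2
      rw [Finset.sum_eq_sum_Ico_succ_bot hsN, if_pos rfl, h1, h2]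
      congr 1
      refine Finset.sum_congr rfl fun t ht => ?_
      have := (Finset.mem_Ico.1 ht).1
      rw [if_neg (by omega)]

theorem exhaustion {Ω H : Type*} {m : MeasurableSpace Ω} {P : Measure Ω} [IsProbabilityMeasure P]
    [NormedAddCommGroup H] [NormedSpace ℝ H] [CompleteSpace H] (D : Set H) (hD0 : (0 : H) ∈ D)
    (hadd : ∀ x ∈ D, ∀ y ∈ D, x + y ∈ D) (hsmul : ∀ x ∈ D, ∀ a : ℝ, 0 ≤ a → a • x ∈ D)
    (hcl : IsClosed D) (Φ : H → Set Ω) (hmeas : ∀ Z ∈ D, MeasurableSet (Φ Z))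
    (hmono : ∀ Z ∈ D, ∀ W ∈ D, ∀ a : ℝ, 0 < a → ∀ᵐ ω ∂P, ω ∈ Φ Z → ω ∈ Φ (a • Z + W)) :
    ∃ Z ∈ D, ∀ W ∈ D, ∀ᵐ ω ∂P, ω ∈ Φ W → ω ∈ Φ Z := by
  classical
  obtain ⟨u, -, hu, huS⟩ := exists_seq_tendsto_sSup (S := (fun Z => P (Φ Z)) '' D)
    ⟨_, 0, hD0, rfl⟩ (OrderTop.bddAbove _)
  choose Z hZD hZu using huS
  let a : ℕ → ℝ := fun n => (1 / 2 : ℝ) ^ n / (1 + ‖Z n‖)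
  have ha : ∀ n, 0 < a n := fun n => by positivity
  have hsumm : Summable fun n => a n • Z n := by
    refine Summable.of_norm_bounded (g := fun n => (1 / 2 : ℝ) ^ n) summable_geometric_two ?_
    intro n
    rw [norm_smul, Real.norm_of_nonneg (ha n).le]
    simp only [a]
    rw [div_mul_eq_mul_div, div_le_iff₀ (by positivity)]
    have : (0 : ℝ) ≤ (1 / 2 : ℝ) ^ n := by positivity
    nlinarith [norm_nonneg (Z n)]
  have htsum : ∀ f : ℕ → H, (∀ n, f n ∈ D) → ∑' n, f n ∈ D := by
    intro f hf
    have hfin : ∀ s : Finset ℕ, ∑ n ∈ s, f n ∈ D := by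
      intro s
      induction s using Finset.induction_on with
      | empty => simpa using hD0
      | insert b s hb ih =>
        rw [Finset.sum_insert hb]
        exact hadd _ (hf b) _ ih
    by_cases hs : Summable f
    · exact hcl.mem_of_tendsto hs.hasSum (Filter.Eventually.of_forall hfin)
    · rw [tsum_eq_zero_of_not_summable hs]
      exact hD0
  have hanD : ∀ n, a n • Z n ∈ D := fun n => hsmul _ (hZD n) _ (ha n).le
  set Y : H := ∑' n, a n • Z n with hY
  have hYD : Y ∈ D := htsum _ hanD
  have hsub : ∀ n, ∀ᵐ ω ∂P, ω ∈ Φ (Z n) → ω ∈ Φ Y := by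
    intro n
    have h1 := hsumm.tsum_eq_add_tsum_ite n
    rw [← hY] at h1
    rw [h1]
    refine hmono _ (hZD n) _ (htsum _ fun k => ?_) _ (ha n)
    split_ifs
    · exact hD0
    · exact hanD k
  have hmax : ∀ W ∈ D, P (Φ W) ≤ P (Φ Y) := by
    intro W hW
    refine (le_sSup (mem_image_of_mem (fun Z => P (Φ Z)) hW)).trans ?_
    refine le_of_tendsto hu (Filter.Eventually.of_forall fun n => ?_)
    rw [← hZu n]
    exact measure_mono_ae (hsub n)
  refine ⟨Y, hYD, fun W hW => ?_⟩
  have hV : Y + W ∈ D := hadd _ hYD _ hW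
  have h1 : ∀ᵐ ω ∂P, ω ∈ Φ Y → ω ∈ Φ (Y + W) := by
    simpa using hmono Y hYD W hW 1 one_pos
  have h2 : ∀ᵐ ω ∂P, ω ∈ Φ W → ω ∈ Φ (Y + W) := by
    simpa [add_comm] using hmono W hW Y hYD 1 one_pos
  have h3 : Φ Y =ᵐ[P] Φ (Y + W) :=
    ae_eq_of_ae_subset_of_measure_ge h1 (hmax _ hV) (hmeas _ hYD).nullMeasurableSet
      (measure_ne_top _ _)
  filter_upwards [h2, h3.mem_iff] with ω h4 h5 h6
  exact h5.2 (h4 h6)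

/-- dual cone in L² -/
def polarL2 {Ω : Type*} {d : ℕ} {m : MeasurableSpace Ω} (P : Measure Ω)
    (R : Set (Ω → Fin d → ℝ)) : Set (Lp (EuclideanSpace ℝ (Fin d)) 2 P) :=
  {Z | ∀ X : Lp (EuclideanSpace ℝ (Fin d)) 2 P, (fun ω => WithLp.ofLp (X ω)) ∈ R →
    inner ℝ X Z ≤ 0}

set_option linter.unusedSectionVars false

section
variable {Ω : Type*} {d : ℕ} {m : MeasurableSpace Ω} {P : Measure Ω} [IsProbabilityMeasure P]

theorem polarL2_closed (R : Set (Ω → Fin d → ℝ)) : IsClosed (polarL2 P R) := by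
  have : polarL2 P R = ⋂ X : Lp (EuclideanSpace ℝ (Fin d)) 2 P,
      ⋂ _ : (fun ω => WithLp.ofLp (X ω)) ∈ R, {Z | inner ℝ X Z ≤ 0} := by
    ext Z
    simp [polarL2]
  rw [this]
  exact isClosed_iInter fun X => isClosed_iInter fun _ =>
    isClosed_le (by fun_prop) continuous_const

theorem memLp_of_bdd {f : Ω → Fin d → ℝ} (hf : Measurable f) {c : ℝ} (hc : ∀ ω, ‖f ω‖ ≤ c) :
    MemLp (fun ω => (WithLp.toLp 2 (f ω) : EuclideanSpace ℝ (Fin d))) 2 P := by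
  have hm : Measurable fun ω => (WithLp.toLp 2 (f ω) : EuclideanSpace ℝ (Fin d)) :=
    (PiLp.continuous_toLp 2 (fun _ : Fin d => ℝ)).measurable.comp hf
  obtain ⟨K, hK⟩ := (PiLp.continuousLinearEquiv 2 ℝ (fun _ : Fin d => ℝ)).symm.toContinuousLinearMap.isBoundedLinearMap.bound
  refine MemLp.of_bound hm.aestronglyMeasurable (K * c) (Filter.Eventually.of_forall fun ω => ?_)
  refine (hK.2 (f ω)).trans ?_
  exact mul_le_mul_of_nonneg_left (hc ω) hK.1.le

theorem inner_toLp {f : Ω → Fin d → ℝ} (hf : Measurable f) {c : ℝ} (hc : ∀ ω, ‖f ω‖ ≤ c)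
    (Z : Lp (EuclideanSpace ℝ (Fin d)) 2 P) :
    inner ℝ ((memLp_of_bdd (P := P) hf hc).toLp _) Z = ∫ ω, ∑ i, f ω i * Z ω i ∂P := by
  rw [L2.inner_def]
  refine integral_congr_ae ?_
  filter_upwards [(memLp_of_bdd (P := P) hf hc).coeFn_toLp] with ω h
  rw [h, PiLp.inner_apply]
  simp [mul_comm]

theorem polarL2_test {F : MeasurableSpace Ω} {R : Set (Ω → Fin d → ℝ)} (hR : GoodSet P F R)
    {Z : Lp (EuclideanSpace ℝ (Fin d)) 2 P} (hZ : Z ∈ polarL2 P R)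
    {f : Ω → Fin d → ℝ} (hf : Measurable[m] f) {c : ℝ} (hc : ∀ ω, ‖f ω‖ ≤ c) (hfR : f ∈ R) :
    ∫ ω, ∑ i, f ω i * Z ω i ∂P ≤ 0 := by
  rw [← inner_toLp (P := P) hf hc]
  refine hZ _ (hR.congr hfR ?_)
  filter_upwards [(memLp_of_bdd (P := P) hf hc).coeFn_toLp] with ω h
  rw [h]

theorem polarL2_sep {F : MeasurableSpace Ω} {R : Set (Ω → Fin d → ℝ)} (hR : GoodSet P F R)
    {f : Ω → Fin d → ℝ} (hf : Measurable[m] f) {c : ℝ} (hc : ∀ ω, ‖f ω‖ ≤ c) (hfR : f ∉ R) :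
    ∃ Z ∈ polarL2 P R, 0 < ∫ ω, ∑ i, f ω i * Z ω i ∂P := by
  let C : ProperCone ℝ (Lp (EuclideanSpace ℝ (Fin d)) 2 P) :=
    { carrier := {X | (fun ω => WithLp.ofLp (X ω)) ∈ R}
      add_mem' := by
        intro X Y hX hY
        refine hR.congr (hR.add _ _ hX hY) ?_
        filter_upwards [Lp.coeFn_add X Y] with ω h
        rw [h]
        simp
      zero_mem' := by
        refine hR.congr hR.zero ?_
        filter_upwards [Lp.coeFn_zero (EuclideanSpace ℝ (Fin d)) 2 P] with ω h
        rw [h]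
        simp
      smul_mem' := by
        intro a X hX
        refine hR.congr (hR.smul (fun _ => (a : ℝ)) _ measurable_const (fun _ => a.2) hX) ?_
        filter_upwards [Lp.coeFn_smul (a : ℝ) X] with ω h
        have h' : (a • X : Lp (EuclideanSpace ℝ (Fin d)) 2 P) = (a : ℝ) • X := rfl
        rw [h', h]
        simp
      isClosed' := by
        refine IsSeqClosed.isClosed ?_
        intro X Y hX hXY
        have h1 := tendstoInMeasure_of_tendsto_Lp hXY
        obtain ⟨ns, -, hns⟩ := h1.exists_seq_tendsto_ae
        refine hR.closed (fun k ω => WithLp.ofLp (X (ns k) ω)) _ (fun k => hX (ns k)) ?_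
        filter_upwards [hns] with ω h
        exact ((PiLp.continuous_ofLp 2 (fun _ : Fin d => ℝ)).tendsto _).comp h }
  have hnot : (memLp_of_bdd (P := P) hf hc).toLp _ ∉ C := by
    intro h
    apply hfR
    refine hR.congr (show (fun ω => WithLp.ofLp
      (((memLp_of_bdd (P := P) hf hc).toLp _ : Lp (EuclideanSpace ℝ (Fin d)) 2 P) ω)) ∈ R from h) ?_
    filter_upwards [(memLp_of_bdd (P := P) hf hc).coeFn_toLp] with ω h
    rw [h]
  obtain ⟨y, hy1, hy2⟩ := C.hyperplane_separation' hnot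
  refine ⟨-y, ?_, ?_⟩
  · intro X hX
    have := hy1 X hX
    rw [inner_neg_right]
    linarith
  · rw [← inner_toLp (P := P) hf hc, inner_neg_right]
    linarith

theorem integrable_dot {f : Ω → Fin d → ℝ} (hf : Measurable f) {c : ℝ} (hc : ∀ ω, ‖f ω‖ ≤ c)
    {Z : Ω → Fin d → ℝ} (hZ : Integrable Z P) :
    Integrable (fun ω => ∑ i, f ω i * Z ω i) P := by
  refine integrable_finsetSum _ fun i _ => ?_
  refine Integrable.bdd_mul (c := c) (Integrable.eval hZ i) ?_ ?_
  · exact ((measurable_pi_apply i).comp hf).aestronglyMeasurable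
  · exact Filter.Eventually.of_forall fun ω => (norm_le_pi_norm (f ω) i).trans (hc ω)

theorem integrable_Lp (Z : Lp (EuclideanSpace ℝ (Fin d)) 2 P) :
    Integrable (fun ω => WithLp.ofLp (Z ω)) P := by
  have h : Integrable Z P := (Lp.memLp Z).integrable (by norm_num)
  exact (PiLp.continuousLinearEquiv 2 ℝ (fun _ : Fin d => ℝ)).toContinuousLinearMap.integrable_comp h

theorem condExp_dot {F : MeasurableSpace Ω} (hF : F ≤ m) {f : Ω → Fin d → ℝ}
    (hf : Measurable[F] f) {c : ℝ} (hc : ∀ ω, ‖f ω‖ ≤ c)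
    {Z : Ω → Fin d → ℝ} (hZ : Integrable Z P) :
    P[fun ω => ∑ i, f ω i * Z ω i | F] =ᵐ[P] fun ω => ∑ i, f ω i * (P[Z | F]) ω i := by
  have hint : ∀ i, Integrable (fun ω => f ω i * Z ω i) P := by
    intro i
    refine Integrable.bdd_mul (c := c) (Integrable.eval hZ i) ?_ ?_
    · exact ((measurable_pi_apply i).comp (hf.mono hF le_rfl)).aestronglyMeasurable
    · exact Filter.Eventually.of_forall fun ω => (norm_le_pi_norm (f ω) i).trans (hc ω)
  have h1 : P[fun ω => ∑ i, f ω i * Z ω i | F] =ᵐ[P]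
      fun ω => ∑ i, P[fun ω => f ω i * Z ω i | F] ω := by
    have := condExp_finsetSum (s := Finset.univ) (f := fun i ω => f ω i * Z ω i)
      (fun i _ => hint i) F
    convert this using 1
    · congr 1
      ext ω
      simp
    · ext ω
      simp
  have h2 : ∀ i, P[fun ω => f ω i * Z ω i | F] =ᵐ[P] fun ω => f ω i * (P[Z | F]) ω i := by
    intro i
    have h3 := condExp_mul_of_stronglyMeasurable_left (μ := P) (m := F)
      (f := fun ω => f ω i) (g := fun ω => Z ω i)
      ((measurable_pi_apply i).comp hf).stronglyMeasurable (hint i) (Integrable.eval hZ i)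
    have h4 := (ContinuousLinearMap.proj (R := ℝ) (φ := fun _ : Fin d => ℝ) i).comp_condExp_comm
      (m := F) hZ
    filter_upwards [h3, h4] with ω h5 h6
    simp only [Function.comp_def, ContinuousLinearMap.proj_apply] at h6
    rw [h6]
    exact h5
  filter_upwards [h1, ae_all_iff.2 h2] with ω h3 h4
  rw [h3]
  exact Finset.sum_congr rfl fun i _ => h4 i

end

section
variable {d : ℕ}

theorem gen_isCC {S : Set (Fin d → ℝ)} (hS : S.Nonempty) : IsCC (generatedClosedCone S) := by
  obtain ⟨s, hs⟩ := hS
  refine ⟨?_, ?_, ?_, ?_⟩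
  · rintro C ⟨h1, h2, h3, h4⟩
    simpa using h4 s (h1 hs) 0 le_rfl
  · rintro x hx y hy C ⟨h1, h2, h3, h4⟩
    have hx' := hx C ⟨h1, h2, h3, h4⟩
    have hy' := hy C ⟨h1, h2, h3, h4⟩
    have h5 := h3 hx' hy' (by norm_num : (0 : ℝ) ≤ 1 / 2) (by norm_num : (0 : ℝ) ≤ 1 / 2)
      (by norm_num)
    have h6 := h4 _ h5 2 (by norm_num)
    rw [smul_add, smul_smul, smul_smul] at h6
    norm_num at h6
    exact h6
  · rintro x hx a ha C ⟨h1, h2, h3, h4⟩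
    exact h4 x (hx C ⟨h1, h2, h3, h4⟩) a ha
  · exact isClosed_sInter fun C hC => hC.2.1

theorem subset_gen (S : Set (Fin d → ℝ)) : S ⊆ generatedClosedCone S :=
  fun _ hx _ hC => hC.1 hx

theorem gen_dual {S : Set (Fin d → ℝ)} {w : Fin d → ℝ} :
    w ∈ dualCone' (generatedClosedCone S) ↔ ∀ x ∈ S, 0 ≤ ∑ i, x i * w i := by
  constructor
  · intro h x hx
    exact h x (subset_gen S hx)
  · intro h x hx
    refine hx {x | 0 ≤ ∑ i, x i * w i} ⟨h, ?_, ?_, ?_⟩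
    · exact isClosed_le continuous_const (by fun_prop)
    · intro y hy z hz a b ha hb _
      have : ∑ i, (a • y + b • z) i * w i = a * ∑ i, y i * w i + b * ∑ i, z i * w i := by
        rw [Finset.mul_sum, Finset.mul_sum, ← Finset.sum_add_distrib]
        refine Finset.sum_congr rfl fun i _ => ?_
        simp
        ring
      simp only [mem_ofPred_eq] at hy hz ⊢
      rw [this]
      positivity
    · intro y hy c hc
      have : ∑ i, (c • y) i * w i = c * ∑ i, y i * w i := by
        rw [Finset.mul_sum]
        refine Finset.sum_congr rfl fun i _ => ?_
        simp
        ring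
      simp only [mem_ofPred_eq] at hy ⊢
      rw [this]
      positivity

theorem bipolar {K : Set (Fin d → ℝ)} (hK : IsCC K) {x : Fin d → ℝ}
    (hx : ∀ w ∈ dualCone' K, 0 ≤ ∑ i, x i * w i) : x ∈ K := by
  by_contra hxK
  let C : ProperCone ℝ (Fin d → ℝ) :=
    { carrier := K
      add_mem' := fun {a b} ha hb => hK.add a ha b hb
      zero_mem' := hK.zero
      smul_mem' := fun c x hx => hK.smul x hx c c.2
      isClosed' := hK.closed }
  obtain ⟨f, hf, hfx⟩ := C.hyperplane_separation_point (x₀ := x) hxK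
  have hdot : ∀ y : Fin d → ℝ, ∑ i, y i * f (Pi.single i 1) = f y := by
    intro y
    conv_rhs => rw [pi_eq_sum_univ' y]
    rw [map_sum]
    refine Finset.sum_congr rfl fun i _ => ?_
    rw [map_smul, smul_eq_mul]
  have := hx (fun i => f (Pi.single i 1)) (by
    intro y hy
    rw [hdot]
    exact hf y hy)
  rw [hdot] at this
  linarith

theorem ri_lineal {K : Set (Fin d → ℝ)} (hK : IsCC K) {x z : Fin d → ℝ}
    (hz : z ∈ intrinsicInterior ℝ (dualCone' K)) (hxz : ∑ i, x i * z i = 0)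
    (hx : x ∈ K) : -x ∈ K := by
  refine bipolar hK fun w hw => ?_
  obtain ⟨y, hy, rfl⟩ := mem_intrinsicInterior.1 hz
  have hws : w ∈ affineSpan ℝ (dualCone' K) := subset_affineSpan ℝ _ hw
  let φ : ℝ → affineSpan ℝ (dualCone' K) :=
    fun t => ⟨AffineMap.lineMap (y : Fin d → ℝ) w t, AffineMap.lineMap_mem t y.2 hws⟩
  have hφ : Continuous φ := by
    refine Continuous.subtype_mk ?_ _
    exact AffineMap.lineMap_continuous
  have hφ0 : φ 0 = y := by
    apply Subtype.ext
    simp [φ]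
  have hnhds : ∀ᶠ t in nhds (0 : ℝ), φ t ∈ interior ((↑) ⁻¹' dualCone' K :
      Set (affineSpan ℝ (dualCone' K))) := by
    refine hφ.continuousAt.eventually_mem ?_
    rw [hφ0]
    exact isOpen_interior.mem_nhds hy
  obtain ⟨ε, hε, hball⟩ := Metric.eventually_nhds_iff.1 hnhds
  have h1 := interior_subset (hball (y := -(ε / 2)) (by
    rw [dist_zero_right, norm_neg, Real.norm_of_nonneg (by positivity)]; linarith))
  have h2 : 0 ≤ ∑ i, x i * (AffineMap.lineMap (y : Fin d → ℝ) w (-(ε / 2)) : Fin d → ℝ) i :=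
    h1 x hx
  have h3 : ∑ i, x i * (AffineMap.lineMap (y : Fin d → ℝ) w (-(ε / 2)) : Fin d → ℝ) i =
      (1 + ε / 2) * ∑ i, x i * (y : Fin d → ℝ) i - ε / 2 * ∑ i, x i * w i := by
    rw [Finset.mul_sum, Finset.mul_sum, ← Finset.sum_sub_distrib]
    refine Finset.sum_congr rfl fun i _ => ?_
    simp [AffineMap.lineMap_apply]
    ring
  rw [h3, hxz] at h2
  have h4 : ∑ i, (-x) i * w i = - ∑ i, x i * w i := by
    simp
  rw [h4]
  nlinarith

theorem mem_ri {ι : Type*} [Finite ι] (g : ι → Fin d → ℝ) {z : Fin d → ℝ}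
    (hz : ∀ j, 0 ≤ ∑ i, g j i * z i)
    (hz' : ∀ j, 0 < ∑ i, g j i * z i ∨ -(g j) ∈ generatedClosedCone (range g)) :
    z ∈ intrinsicInterior ℝ (dualCone' (generatedClosedCone (range g))) := by
  have hzK : z ∈ dualCone' (generatedClosedCone (range g)) := by
    rw [gen_dual]
    rintro _ ⟨j, rfl⟩
    exact hz j
  rw [mem_intrinsicInterior]
  refine ⟨⟨z, subset_affineSpan ℝ _ hzK⟩, ?_, rfl⟩
  rw [mem_interior]
  refine ⟨(↑) ⁻¹' {w : Fin d → ℝ | ∀ j, 0 < ∑ i, g j i * z i → 0 < ∑ i, g j i * w i},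
    ?_, ?_, fun j hj => hj⟩
  · rintro ⟨w, hw⟩ hwU
    simp only [mem_preimage, mem_ofPred_eq] at hwU ⊢
    rw [gen_dual]
    rintro _ ⟨j, rfl⟩
    rcases hz' j with h | h
    · exact (hwU j h).le
    · let f : (Fin d → ℝ) →ₗ[ℝ] ℝ := ∑ i, (g j i) • LinearMap.proj i
      have hf : ∀ v, f v = ∑ i, g j i * v i := by
        intro v
        simp [f]
      have hle : affineSpan ℝ (dualCone' (generatedClosedCone (range g))) ≤
          (LinearMap.ker f).toAffineSubspace := by
        rw [affineSpan_le]
        intro v hv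
        have h1 := hv _ h
        have h2 := hv _ (subset_gen _ (mem_range_self j))
        have h4 : ∑ i, (-(g j)) i * v i = - ∑ i, g j i * v i := by simp
        show f v = 0
        rw [hf]
        linarith
      have h5 : f w = 0 := hle hw
      rw [← hf, h5]
  · refine IsOpen.preimage continuous_subtype_val ?_
    have : {w : Fin d → ℝ | ∀ j, 0 < ∑ i, g j i * z i → 0 < ∑ i, g j i * w i} =
        ⋂ j, {w : Fin d → ℝ | 0 < ∑ i, g j i * z i → 0 < ∑ i, g j i * w i} := by
      ext w; simp
    rw [this]
    refine isOpen_iInter_of_finite fun j => ?_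
    by_cases h : 0 < ∑ i, g j i * z i
    · simp only [h, true_imp_iff]
      exact isOpen_lt continuous_const (by fun_prop)
    · simp only [h, false_imp_iff]
      exact isOpen_univ

end
theorem meas_pos {Ω : Type*} [MeasurableSpace Ω] {f : Ω → ℝ} (hf : Measurable f) :
    MeasurableSet {ω | 0 < f ω} := measurableSet_lt measurable_const hf

theorem meas_scale {Ω : Type*} [MeasurableSpace Ω] {d : ℕ} {g : Ω → Fin d → ℝ}
    (hg : Measurable g) : Measurable (fun ω => (1 + ‖g ω‖)⁻¹ • g ω) :=
  ((measurable_const.add hg.norm).inv).smul hg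


section
variable {Ω : Type*} {d : ℕ} {m : MeasurableSpace Ω} {P : Measure Ω} [IsProbabilityMeasure P]

theorem polar_nonneg {F0 F : MeasurableSpace Ω} {R : Set (Ω → Fin d → ℝ)} (hR : GoodSet P F0 R)
    (hF : F ≤ m) {g : Ω → Fin d → ℝ} (hg : Measurable[F] g) (hb : ∀ ω, ‖g ω‖ ≤ 1)
    (hneg : ∀ A, MeasurableSet[F] A → A.indicator (-g) ∈ R)
    {Z : Lp (EuclideanSpace ℝ (Fin d)) 2 P} (hZ : Z ∈ polarL2 P R) :
    0 ≤ᵐ[P] P[fun ω => ∑ i, g ω i * Z ω i | F] := by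
  have hgm : Measurable[m] g := hg.mono hF le_rfl
  have hint : Integrable (fun ω => ∑ i, g ω i * Z ω i) P := integrable_dot hgm hb (integrable_Lp Z)
  have hset : ∀ A, MeasurableSet[F] A → 0 ≤ ∫ ω in A, ∑ i, g ω i * Z ω i ∂P := by
    intro A hA
    have h1 := polarL2_test (P := P) hR hZ (f := A.indicator (-g)) (c := 1)
      (hgm.neg.indicator (hF _ hA)) (by
        intro ω
        refine (norm_indicator_le_norm_self _ _).trans ?_
        simpa using hb ω) (hneg A hA)
    rw [← integral_indicator (hF _ hA)]
    have h2 : ∀ ω, ∑ i, A.indicator (-g) ω i * Z ω i =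
        - A.indicator (fun ω => ∑ i, g ω i * Z ω i) ω := by
      intro ω
      by_cases hω : ω ∈ A <;> simp [hω]
    simp only [h2] at h1
    rw [integral_neg] at h1
    linarith
  have htrim : 0 ≤ᵐ[P.trim hF] P[fun ω => ∑ i, g ω i * Z ω i | F] := by
    refine ae_nonneg_of_forall_setIntegral_nonneg (integrable_condExp.trim hF
      stronglyMeasurable_condExp) ?_
    intro A hA _
    rw [← setIntegral_trim hF stronglyMeasurable_condExp hA, setIntegral_condExp hF hint hA]
    exact hset A hA
  exact ae_le_of_ae_le_trim htrim

theorem polar_max {F0 F : MeasurableSpace Ω} {R : Set (Ω → Fin d → ℝ)} (hR : GoodSet P F0 R)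
    (hF : F ≤ m) {g : Ω → Fin d → ℝ} (hg : Measurable[F] g) (hb : ∀ ω, ‖g ω‖ ≤ 1)
    (hneg : ∀ A, MeasurableSet[F] A → A.indicator (-g) ∈ R) :
    ∃ Z ∈ polarL2 P R, {ω | 0 < (P[fun ω => ∑ i, g ω i * Z ω i | F]) ω}ᶜ.indicator g ∈ R := by
  have hgm : Measurable[m] g := hg.mono hF le_rfl
  have hint : ∀ Z : Lp (EuclideanSpace ℝ (Fin d)) 2 P,
    Integrable (fun ω => ∑ i, g ω i * Z ω i) P := fun Z => integrable_dot hgm hb (integrable_Lp Z)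
  have hΦm : ∀ Z : Lp (EuclideanSpace ℝ (Fin d)) 2 P,
      MeasurableSet[F] {ω | 0 < (P[fun ω => ∑ i, g ω i * Z ω i | F]) ω} := by
    intro Z
    exact @meas_pos Ω F _ stronglyMeasurable_condExp.measurable
  obtain ⟨Z, hZ, hmax⟩ := exhaustion (P := P) (polarL2 P R) (by intro X _; simp)
    (by
      intro x hx y hy X hX
      rw [inner_add_right]
      linarith [hx X hX, hy X hX])
    (by
      intro x hx a ha X hX
      rw [inner_smul_right]
      exact mul_nonpos_of_nonneg_of_nonpos ha (hx X hX))
    (polarL2_closed R) (fun Z => {ω | 0 < (P[fun ω => ∑ i, g ω i * Z ω i | F]) ω})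
    (fun Z _ => hF _ (hΦm Z))
    (by
      intro Z _ W hW a ha
      have h1 : P[fun ω => ∑ i, g ω i * (a • Z + W : Lp (EuclideanSpace ℝ (Fin d)) 2 P) ω i | F]
          =ᵐ[P] a • P[fun ω => ∑ i, g ω i * Z ω i | F] + P[fun ω => ∑ i, g ω i * W ω i | F] := by
        have h2 : (fun ω => ∑ i, g ω i * (a • Z + W : Lp (EuclideanSpace ℝ (Fin d)) 2 P) ω i)
            =ᵐ[P] a • (fun ω => ∑ i, g ω i * Z ω i) + fun ω => ∑ i, g ω i * W ω i := by
          filter_upwards [Lp.coeFn_add (a • Z) W, Lp.coeFn_smul a Z] with ω h3 h4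
          rw [h3]
          simp only [Pi.add_apply, Pi.smul_apply, h4, smul_eq_mul, Finset.mul_sum,
            ← Finset.sum_add_distrib, PiLp.add_apply, PiLp.smul_apply]
          refine Finset.sum_congr rfl fun i _ => ?_
          ring
        refine (condExp_congr_ae h2).trans ?_
        refine (condExp_add ((hint Z).smul a) (hint W) F).trans ?_
        filter_upwards [condExp_smul (μ := P) a (fun ω => ∑ i, g ω i * Z ω i) F] with ω h5
        simp only [Pi.add_apply, h5]
      filter_upwards [h1, polar_nonneg hR hF hg hb hneg hW] with ω h2 h3 h4
      change 0 < _ at h4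
      change 0 < _
      rw [h2]
      simp only [Pi.add_apply, Pi.smul_apply, smul_eq_mul, Pi.zero_apply] at h3 ⊢
      have := mul_pos ha h4
      linarith)
  refine ⟨Z, hZ, ?_⟩
  by_contra hcon
  have hA : MeasurableSet[F] {ω | 0 < (P[fun ω => ∑ i, g ω i * Z ω i | F]) ω}ᶜ :=
    (hΦm Z).compl
  set A := {ω | 0 < (P[fun ω => ∑ i, g ω i * Z ω i | F]) ω}ᶜ with hAdef
  obtain ⟨W, hW, hpos⟩ := polarL2_sep (P := P) hR (f := A.indicator g) (c := 1)
    (hgm.indicator (hF _ hA)) (by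
      intro ω
      exact (norm_indicator_le_norm_self _ _).trans (hb ω)) hcon
  have h2 : ∀ ω, ∑ i, A.indicator g ω i * W ω i =
      A.indicator (fun ω => ∑ i, g ω i * W ω i) ω := by
    intro ω
    by_cases hω : ω ∈ A <;> simp [hω]
  simp only [h2] at hpos
  rw [integral_indicator (hF _ hA), ← setIntegral_condExp hF (hint W) hA] at hpos
  refine absurd hpos (not_lt.2 ?_)
  refine integral_nonpos_of_ae ?_
  rw [Filter.EventuallyLE, ae_restrict_iff' (hF _ hA)]
  filter_upwards [hmax W hW] with ω h3 h4
  by_contra h5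
  exact h4 (h3 (not_le.1 h5))

theorem hard_dir {ι : Type*} [Fintype ι] [Nonempty ι] {F : ℕ → MeasurableSpace Ω}
    (hF : Monotone F) (hFm : ∀ t, F t ≤ m) (N : ℕ) (g : ℕ → ι → Ω → Fin d → ℝ)
    (hg : ∀ t j, Measurable[F t] (g t j))
    (hNA : ∀ x : ℕ → Ω → Fin d → ℝ,
      (∀ t, MemL0 P (F t) (fun ω => -generatedClosedCone (range fun j => g t j ω)) (x t)) →
      (∀ᵐ ω ∂P, ∑ t ∈ Finset.range N, x t ω = 0) →
      ∀ t < N, MemL0 P (F t) (fun ω => -generatedClosedCone (range fun j => g t j ω)) (-(x t))) :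
    ∃ Z : Ω → Fin d → ℝ, Integrable Z P ∧ ∀ t < N, ∀ᵐ ω ∂P, (P[Z | F t]) ω ∈
      intrinsicInterior ℝ (dualCone' (generatedClosedCone (range fun j => g t j ω))) := by
  classical
  let K : ℕ → Ω → Set (Fin d → ℝ) := fun t ω => generatedClosedCone (range fun j => g t j ω)
  have hK : ∀ t ω, IsCC (K t ω) := fun t ω => gen_isCC (range_nonempty _)
  have hC : ∀ t ω, IsCC (-(K t ω)) := by
    intro t ω
    refine ⟨by simpa using (hK t ω).zero, ?_, ?_, (hK t ω).closed.neg⟩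
    · intro x hx y hy
      rw [mem_neg, neg_add]
      exact (hK t ω).add _ hx _ hy
    · intro x hx a ha
      rw [mem_neg, ← smul_neg]
      exact (hK t ω).smul _ hx _ ha
  set R := tailSet P F (fun t ω => -(K t ω)) N 0 with hRdef
  have hR : GoodSet P (F 0) R := tailSet_good hF hC N hNA N 0 (by omega) 0 le_rfl
  let b : ℕ → ι → Ω → ℝ := fun t j ω => (1 + ‖g t j ω‖)⁻¹
  have hbpos : ∀ t j ω, 0 < b t j ω := fun t j ω => by positivity
  let h : ℕ → ι → Ω → Fin d → ℝ := fun t j ω => b t j ω • g t j ω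
  have hh : ∀ t j, Measurable[F t] (h t j) := by
    intro t j
    exact @meas_scale Ω (F t) d _ (hg t j)
  have hh1 : ∀ t j ω, ‖h t j ω‖ ≤ 1 := by
    intro t j ω
    simp only [h, norm_smul, b, norm_inv]
    rw [Real.norm_of_nonneg (by positivity), inv_mul_le_one₀ (by positivity)]
    linarith
  have hhK : ∀ t j ω, h t j ω ∈ K t ω := fun t j ω =>
    (hK t ω).smul _ (subset_gen _ (mem_range_self j)) _ (hbpos t j ω).le
  have hL0 : ∀ t j A, MeasurableSet[F t] A →
      MemL0 P (F t) (fun ω => -(K t ω)) (A.indicator (-(h t j))) := by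
    intro t j A hA
    refine L0indicator (hC t) ⟨(hh t j).neg, Filter.Eventually.of_forall fun ω => ?_⟩ hA
    simpa using hhK t j ω
  have hneg : ∀ t < N, ∀ j A, MeasurableSet[F t] A → A.indicator (-(h t j)) ∈ R := by
    intro t ht j A hA
    refine ⟨fun s => if s = t then A.indicator (-(h t j)) else fun _ => 0, ?_, ?_⟩
    · intro s
      by_cases hs : s = t
      · subst hs
        simpa using hL0 s j A hA
      · simp only [hs, if_false]
        exact L0zero (hC s)
    · refine Filter.Eventually.of_forall fun ω => ?_
      rw [Finset.sum_eq_single t]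
      · simp
      · intro s _ hs
        simp [hs]
      · intro hcon
        simp at hcon
        omega
  have hlin : ∀ t < N, ∀ j A, MeasurableSet[F t] A → A.indicator (h t j) ∈ R →
      ∀ᵐ ω ∂P, ω ∈ A → -(g t j ω) ∈ K t ω := by
    rintro t ht j A hA ⟨x, hx, hsum⟩
    let z : ℕ → Ω → Fin d → ℝ :=
      fun s => if s = t then fun ω => x s ω + A.indicator (-(h t j)) ω else x s
    have h1 := hNA z (by
      intro s
      by_cases hs : s = t
      · subst hs
        simp only [z, if_true]
        exact L0add (hC s) (hx s) (hL0 s j A hA)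
      · simp only [z, hs, if_false]
        exact hx s) (by
      filter_upwards [hsum] with ω h2
      have h3 : ∀ s, z s ω = x s ω + if s = t then A.indicator (-(h t j)) ω else 0 := by
        intro s
        by_cases hs : s = t <;> simp [z, hs]
      simp only [h3, Finset.sum_add_distrib]
      rw [← Finset.range_eq_Ico] at h2
      rw [← h2, Finset.sum_ite_eq' , if_pos (Finset.mem_range.2 ht)]
      by_cases hω : ω ∈ A <;> simp [hω]) t ht
    filter_upwards [h1.2, (hx t).2] with ω h2 h3 hω
    have h4 := (hC t ω).add _ h2 _ h3
    simp only [z, if_true, Pi.neg_apply, hω, indicator_of_mem] at h4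
    have h5 : -(h t j ω) ∈ K t ω := by
      rw [mem_neg] at h4
      convert h4 using 1
      abel
    have h6 := (hK t ω).smul _ h5 (b t j ω)⁻¹ (inv_nonneg.2 (hbpos t j ω).le)
    simp only [h, smul_neg] at h6
    rwa [inv_smul_smul₀ (hbpos t j ω).ne'] at h6
  have hex : ∀ p : Fin N × ι, ∃ Z ∈ polarL2 P R,
      {ω | 0 < (P[fun ω => ∑ i, h p.1 p.2 ω i * Z ω i | F p.1]) ω}ᶜ.indicator (h p.1 p.2) ∈ R :=
    fun p => polar_max hR (hFm _) (hh _ _) (hh1 _ _) (hneg _ p.1.2 p.2)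
  choose Z hZ hZR using hex
  have hpadd : ∀ x ∈ polarL2 P R, ∀ y ∈ polarL2 P R, x + y ∈ polarL2 P R := by
    intro x hx y hy X hX
    rw [inner_add_right]
    linarith [hx X hX, hy X hX]
  have hpsum : ∀ s : Finset (Fin N × ι), ∑ p ∈ s, Z p ∈ polarL2 P R := by
    intro s
    induction s using Finset.induction_on with
    | empty => intro X _; simp
    | insert p s hp ih =>
      rw [Finset.sum_insert hp]
      exact hpadd _ (hZ p) _ ih
  set Y := ∑ p, Z p with hY
  have hYp : Y ∈ polarL2 P R := hpsum _
  refine ⟨fun ω => WithLp.ofLp (Y ω), integrable_Lp Y, fun t ht => ?_⟩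
  have key : ∀ j, ∀ᵐ ω ∂P,
      0 ≤ ∑ i, g t j ω i * (P[fun ω => WithLp.ofLp (Y ω) | F t]) ω i ∧
      (0 < ∑ i, g t j ω i * (P[fun ω => WithLp.ofLp (Y ω) | F t]) ω i ∨ -(g t j ω) ∈ K t ω) := by
    intro j
    have hdot := condExp_dot (P := P) (hFm t) (hh t j) (hh1 t j) (integrable_Lp Y)
    have hnn := polar_nonneg hR (hFm t) (hh t j) (hh1 t j) (hneg t ht j) hYp
    have hl := hlin t ht j _ (by
      refine MeasurableSet.compl ?_
      exact @meas_pos Ω (F t) _ stronglyMeasurable_condExp.measurable) (hZR (⟨t, ht⟩, j))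
    have hsplit : Y = Z (⟨t, ht⟩, j) + ∑ p ∈ Finset.univ.erase (⟨t, ht⟩, j), Z p := by
      rw [hY, Finset.add_sum_erase _ _ (Finset.mem_univ _)]
    have hWp := hpsum (Finset.univ.erase (⟨t, ht⟩, j))
    set W := ∑ p ∈ Finset.univ.erase (⟨t, ht⟩, j), Z p with hW
    have hnnW := polar_nonneg hR (hFm t) (hh t j) (hh1 t j) (hneg t ht j) hWp
    have hint : ∀ V : Lp (EuclideanSpace ℝ (Fin d)) 2 P,
        Integrable (fun ω => ∑ i, h t j ω i * V ω i) P :=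
      fun V => integrable_dot ((hh t j).mono (hFm t) le_rfl) (hh1 t j) (integrable_Lp V)
    have hadd : P[fun ω => ∑ i, h t j ω i * Y ω i | F t] =ᵐ[P]
        P[fun ω => ∑ i, h t j ω i * Z (⟨t, ht⟩, j) ω i | F t] +
          P[fun ω => ∑ i, h t j ω i * W ω i | F t] := by
      refine (condExp_congr_ae ?_).trans (condExp_add (hint _) (hint W) (F t))
      rw [hsplit]
      filter_upwards [Lp.coeFn_add (Z (⟨t, ht⟩, j)) W] with ω h3
      rw [h3]
      simp only [Pi.add_apply, ← Finset.sum_add_distrib, PiLp.add_apply, mul_add]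
    filter_upwards [hdot, hnn, hl, hnnW, hadd] with ω h1 h2 h3 h4 h5
    have h6 : ∑ i, h t j ω i * (P[fun ω => WithLp.ofLp (Y ω) | F t]) ω i =
        b t j ω * ∑ i, g t j ω i * (P[fun ω => WithLp.ofLp (Y ω) | F t]) ω i := by
      rw [Finset.mul_sum]
      refine Finset.sum_congr rfl fun i _ => ?_
      simp [h]
      ring
    rw [h6] at h1
    simp only [Pi.zero_apply] at h2 h4
    constructor
    · rw [h1] at h2
      exact nonneg_of_mul_nonneg_right h2 (hbpos t j ω)
    · by_cases h7 : 0 < (P[fun ω => ∑ i, h t j ω i * Z (⟨t, ht⟩, j) ω i | F t]) ω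
      · left
        rw [h5, Pi.add_apply] at h1
        have h8 : 0 < b t j ω * ∑ i, g t j ω i * (P[fun ω => WithLp.ofLp (Y ω) | F t]) ω i := by
          rw [← h1]; linarith
        exact pos_of_mul_pos_right h8 (hbpos t j ω).le
      · right
        exact h3 h7
  filter_upwards [ae_all_iff.2 key] with ω hω
  exact mem_ri (fun j => g t j ω) (fun j => (hω j).1) (fun j => (hω j).2)

/-- easy step: conditional expectation of scalar products -/
theorem easy_step {F : MeasurableSpace Ω} (hF : F ≤ m) {X Z Z' : Ω → Fin d → ℝ}
    (hX : Measurable[F] X) (hZ : Integrable Z P) (hZ' : P[Z | F] =ᵐ[P] Z')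
    (hpos : ∀ᵐ ω ∂P, 0 ≤ ∑ i, X ω i * Z ω i) :
    (∀ᵐ ω ∂P, 0 ≤ ∑ i, X ω i * Z' ω i) ∧
    ((∀ᵐ ω ∂P, ∑ i, X ω i * Z' ω i ≤ 0) → ∀ᵐ ω ∂P, ∑ i, X ω i * Z ω i = 0) := by
  let b : Ω → ℝ := fun ω => (1 + ‖X ω‖)⁻¹
  have hb : ∀ ω, 0 < b ω := fun ω => by positivity
  let Y : Ω → Fin d → ℝ := fun ω => b ω • X ω
  have hY : Measurable[F] Y := @meas_scale Ω F d _ hX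
  have hY1 : ∀ ω, ‖Y ω‖ ≤ 1 := by
    intro ω
    simp only [Y, norm_smul, b, norm_inv]
    rw [Real.norm_of_nonneg (by positivity), inv_mul_le_one₀ (by positivity)]
    linarith
  have hYm : ∀ ω (w : Fin d → ℝ), ∑ i, Y ω i * w i = b ω * ∑ i, X ω i * w i := by
    intro ω w
    rw [Finset.mul_sum]
    refine Finset.sum_congr rfl fun i _ => ?_
    simp [Y]
    ring
  have hdot := condExp_dot (P := P) hF hY hY1 hZ
  have hint : Integrable (fun ω => ∑ i, Y ω i * Z ω i) P :=
    integrable_dot (hY.mono hF le_rfl) hY1 hZ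
  have hpos' : 0 ≤ᵐ[P] fun ω => ∑ i, Y ω i * Z ω i := by
    filter_upwards [hpos] with ω h
    rw [hYm]
    exact mul_nonneg (hb ω).le h
  have hc := condExp_nonneg (m := F) hpos'
  constructor
  · filter_upwards [hdot, hZ', hc] with ω h1 h2 h3
    rw [h1, h2, hYm] at h3
    exact nonneg_of_mul_nonneg_right h3 (hb ω)
  · intro hle
    have h0 : ∫ ω, ∑ i, Y ω i * Z ω i ∂P ≤ 0 := by
      rw [← integral_condExp hF]
      refine integral_nonpos_of_ae ?_
      filter_upwards [hdot, hZ', hle] with ω h1 h2 h3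
      rw [h1, h2, hYm]
      exact mul_nonpos_of_nonneg_of_nonpos (hb ω).le h3
    have h1 : ∫ ω, ∑ i, Y ω i * Z ω i ∂P = 0 := le_antisymm h0 (integral_nonneg_of_ae hpos')
    have h2 := (integral_eq_zero_iff_of_nonneg_ae hpos' hint).1 h1
    filter_upwards [h2] with ω h3
    rw [hYm] at h3
    exact (mul_eq_zero.1 h3).resolve_left (hb ω).ne'

end

/-- indices for the generators of the solvency cone -/
def genVec {d : ℕ} (M : Matrix (Fin d) (Fin d) ℝ) : Fin d ⊕ (Fin d × Fin d) → Fin d → ℝ :=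
  Sum.elim (fun i => Pi.single i 1) (fun p => M p.1 p.2 • Pi.single p.1 1 - Pi.single p.2 1)

theorem solvencyCone_eq {d : ℕ} (M : Matrix (Fin d) (Fin d) ℝ) :
    solvencyCone M = generatedClosedCone (range fun j => genVec M j) := by
  unfold solvencyCone
  congr 1
  ext v
  constructor
  · rintro (⟨i, rfl⟩ | ⟨i, j, rfl⟩)
    · exact ⟨Sum.inl i, rfl⟩
    · exact ⟨Sum.inr (i, j), rfl⟩
  · rintro ⟨i | ⟨i, j⟩, rfl⟩
    · exact Or.inl ⟨i, rfl⟩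
    · exact Or.inr ⟨i, j, rfl⟩

theorem meas_genVec {Ω : Type*} [MeasurableSpace Ω] {d : ℕ} {M : Ω → Matrix (Fin d) (Fin d) ℝ}
    (hM : ∀ i j, Measurable fun ω => M ω i j) (j : Fin d ⊕ (Fin d × Fin d)) :
    Measurable fun ω => genVec (M ω) j := by
  rcases j with i | ⟨i, j⟩
  · exact measurable_const
  · exact ((hM i j).smul measurable_const).sub measurable_const

theorem solvencyCone_isCC {d : ℕ} (hd : 1 ≤ d) (M : Matrix (Fin d) (Fin d) ℝ) :
    IsCC (solvencyCone M) := by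
  haveI : Nonempty (Fin d ⊕ (Fin d × Fin d)) := ⟨Sum.inl ⟨0, hd⟩⟩
  rw [solvencyCone_eq]
  exact gen_isCC (range_nonempty _)

theorem meas_partial {Ω : Type*} [MeasurableSpace Ω] {d : ℕ} {x : ℕ → Ω → Fin d → ℝ} (n : ℕ)
    (hx : ∀ k ∈ Finset.range n, Measurable (x k)) :
    Measurable fun ω => ∑ k ∈ Finset.range n, x k ω :=
  Finset.measurable_sum _ hx

/-- the easy direction, with natural number times -/
theorem easy_dir {Ω : Type*} {d : ℕ} {m : MeasurableSpace Ω} {P : Measure Ω}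
    [IsProbabilityMeasure P] {F : ℕ → MeasurableSpace Ω}
    (hF : Monotone F) (hFm : ∀ t, F t ≤ m) (T : ℕ) {x Z : ℕ → Ω → Fin d → ℝ}
    (hx : ∀ t, Measurable[F t] (x t)) (hZ : ∀ t, Integrable (Z t) P)
    (hM : ∀ t < T, P[Z (t + 1) | F t] =ᵐ[P] Z t)
    (hxZ : ∀ t ≤ T, ∀ᵐ ω ∂P, ∑ i, x t ω i * Z t ω i ≤ 0)
    (hsum : ∀ᵐ ω ∂P, ∑ t ∈ Finset.range (T + 1), x t ω = 0) :
    ∀ t ≤ T, ∀ᵐ ω ∂P, ∑ i, x t ω i * Z t ω i = 0 := by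
  let X : ℕ → Ω → Fin d → ℝ := fun n ω => ∑ k ∈ Finset.range (n + 1), x k ω
  have hX : ∀ n, Measurable[F n] (X n) := fun n =>
    @meas_partial Ω (F n) d x (n + 1) fun k hk =>
      (hx k).mono (hF (Nat.lt_succ_iff.1 (Finset.mem_range.1 hk))) le_rfl
  have hXs : ∀ n ω (w : Fin d → ℝ), ∑ i, X (n + 1) ω i * w i =
      ∑ i, X n ω i * w i + ∑ i, x (n + 1) ω i * w i := by
    intro n ω w
    simp only [X]
    rw [Finset.sum_range_succ _ (n + 1), ← Finset.sum_add_distrib]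
    refine Finset.sum_congr rfl fun i _ => ?_
    rw [Pi.add_apply, add_mul]
  have hT : ∀ᵐ ω ∂P, X T ω = 0 := hsum
  have hback : ∀ k ≤ T, ∀ᵐ ω ∂P, 0 ≤ ∑ i, X (T - k) ω i * Z (T - k) ω i := by
    intro k
    induction k with
    | zero =>
      intro _
      filter_upwards [hT] with ω h
      simp [h]
    | succ k ih =>
      intro hk
      have h1 := ih (by omega)
      have h2 := hxZ (T - k) (by omega)
      obtain ⟨n, hn, hn'⟩ : ∃ n, T - k = n + 1 ∧ T - (k + 1) = n := ⟨T - (k + 1), by omega, rfl⟩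
      rw [hn] at h1 h2
      rw [hn']
      refine (easy_step (hFm n) (hX n) (hZ (n + 1)) (hM n (by omega)) ?_).1
      filter_upwards [h1, h2] with ω h3 h4
      rw [hXs] at h3
      linarith
  have hnn : ∀ n ≤ T, ∀ᵐ ω ∂P, 0 ≤ ∑ i, X n ω i * Z n ω i := by
    intro n hn
    have := hback (T - n) (by omega)
    rwa [show T - (T - n) = n by omega] at this
  have hfor : ∀ n ≤ T, (∀ᵐ ω ∂P, ∑ i, X n ω i * Z n ω i = 0) ∧
      ∀ᵐ ω ∂P, ∑ i, x n ω i * Z n ω i = 0 := by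
    intro n
    induction n with
    | zero =>
      intro h0
      have hX0 : X 0 = x 0 := by
        funext ω
        simp [X]
      have h1 := hnn 0 h0
      have h2 := hxZ 0 h0
      rw [hX0] at h1 ⊢
      have h3 : ∀ᵐ ω ∂P, ∑ i, x 0 ω i * Z 0 ω i = 0 := by
        filter_upwards [h1, h2] with ω h3 h4
        exact le_antisymm h4 h3
      exact ⟨h3, h3⟩
    | succ n ih =>
      intro hn
      have h0 := (ih (by omega)).1
      have h1 := hnn (n + 1) hn
      have h2 := hxZ (n + 1) hn
      have h3 := (easy_step (hFm n) (hX n) (hZ (n + 1)) (hM n (by omega)) (by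
        filter_upwards [h1, h2] with ω h3 h4
        rw [hXs] at h3
        linarith)).2 (h0.mono fun ω h => h.le)
      constructor
      · filter_upwards [h1, h2, h3] with ω h4 h5 h6
        rw [hXs] at h4 ⊢
        linarith
      · filter_upwards [h1, h2, h3] with ω h4 h5 h6
        rw [hXs] at h4
        linarith
  exact fun t ht => (hfor t ht).2

/-- The following are equivalent for a bid-ask process: (i) existence of a
strictly consistent price process (a `P`-martingale `Z` with
`Z_t ∈ ri K_t*` a.e.); (ii) whenever `x_t ∈ L⁰(−K_t, 𝔉_t)` satisfy
`Σ_t x_t = 0` a.s., one has `x_t(ω) ∈ K_t(ω) ∩ (−K_t(ω))` a.e. for every `t`. -/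
theorem strictly_consistent_iff_no_arbitrage_increments
    {Ω : Type*} {d T : ℕ} (hd : 1 ≤ d)
    {m : MeasurableSpace Ω} (P : Measure Ω) [IsProbabilityMeasure P]
    (ℱ : Filtration (Fin (T + 1)) m)
    (hcomplete : ∀ t : Fin (T + 1), ∀ s : Set Ω,
      MeasurableSet[m] s → P s = 0 → MeasurableSet[ℱ t] s)
    (Pi_ : Fin (T + 1) → Ω → Matrix (Fin d) (Fin d) ℝ)
    (hadapted : ∀ t i j, Measurable[ℱ t] fun ω => Pi_ t ω i j)
    (hba : ∀ t ω, IsBidAskMatrix (Pi_ t ω)) :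
    (∃ Z : Fin (T + 1) → Ω → Fin d → ℝ,
        Martingale Z ℱ P ∧
        ∀ t, ∀ᵐ ω ∂P, Z t ω ∈
          intrinsicInterior ℝ (dualCone' (solvencyCone (Pi_ t ω)))) ↔
      (∀ xs : Fin (T + 1) → Ω → Fin d → ℝ,
        (∀ t, MemL0 P (ℱ t) (fun ω => -(solvencyCone (Pi_ t ω))) (xs t)) →
        (∀ᵐ ω ∂P, (∑ t, xs t ω) = 0) →
        ∀ t, ∀ᵐ ω ∂P,
          xs t ω ∈ solvencyCone (Pi_ t ω) ∩ -(solvencyCone (Pi_ t ω))) := by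
  classical
  haveI : Nonempty (Fin d ⊕ (Fin d × Fin d)) := ⟨Sum.inl ⟨0, hd⟩⟩
  let idx : ℕ → Fin (T + 1) := fun n => ⟨min n T, by omega⟩
  have hidx : ∀ t : Fin (T + 1), idx t.val = t := by
    intro t
    apply Fin.ext
    simp only [idx]
    omega
  have hmono : Monotone idx := by
    intro a b hab
    rw [Fin.le_def]
    simp only [idx]
    omega
  have hF : Monotone fun n => ℱ (idx n) := fun a b hab => ℱ.mono (hmono hab)
  have hFm : ∀ n, ℱ (idx n) ≤ m := fun n => ℱ.le _
  have hcc := fun M : Matrix (Fin d) (Fin d) ℝ => solvencyCone_isCC hd M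
  constructor
  · rintro ⟨Z, hM, hZ⟩ xs hxs hsum
    have key := easy_dir (P := P) hF hFm T (x := fun n => xs (idx n)) (Z := fun n => Z (idx n))
      (fun n => (hxs _).1) (fun n => hM.integrable _)
      (fun n _ => hM.condExp_ae_eq (hmono (Nat.le_succ n)))
      (by
        intro n _
        filter_upwards [(hxs (idx n)).2, hZ (idx n)] with ω h1 h2
        have h3 := intrinsicInterior_subset h2 _ h1
        simp only [Pi.neg_apply, neg_mul, Finset.sum_neg_distrib] at h3
        linarith)
      (by
        filter_upwards [hsum] with ω h
        rw [← Fin.sum_univ_eq_sum_range (fun n => xs (idx n) ω)]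
        simpa only [hidx] using h)
    intro t
    have h0 := key t.val (by omega)
    simp only [hidx] at h0
    filter_upwards [h0, (hxs t).2, hZ t] with ω h1 h2 h3
    refine ⟨?_, h2⟩
    have h4 := ri_lineal (hcc (Pi_ t ω)) h3 (x := -(xs t ω)) (by
      simp only [Pi.neg_apply, neg_mul, Finset.sum_neg_distrib, h1, neg_zero]) h2
    simpa using h4
  · intro hNA
    obtain ⟨Z, hZ, hri⟩ := hard_dir (P := P) hF hFm (T + 1)
      (fun n j ω => genVec (Pi_ (idx n) ω) j)
      (fun n j => @meas_genVec Ω (ℱ (idx n)) d _ (fun i k => hadapted (idx n) i k) j)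
      (by
        intro x hx hsum n hn
        simp only [← solvencyCone_eq] at hx ⊢
        have h1 := hNA (fun t => x t.val)
          (fun t => by
            have := hx t.val
            rwa [hidx] at this)
          (by
            filter_upwards [hsum] with ω h
            rw [← h]
            exact Fin.sum_univ_eq_sum_range (fun n => x n ω) (T + 1))
          ⟨n, hn⟩
        have h2 := hidx ⟨n, hn⟩
        simp only at h2
        refine ⟨(hx n).1.neg, ?_⟩
        rw [h2]
        filter_upwards [h1] with ω h3
        simpa using h3.1)
    refine ⟨fun t => P[Z | ℱ t], martingale_condExp Z ℱ P, fun t => ?_⟩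
    have h1 := hri t.val t.2
    simp only [← solvencyCone_eq, hidx] at h1
    exact h1
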